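/- arXiv:math/0412166 — 3 statements merged into one kernel-verified Lean document; each statement's English description precedes it below -/
import Mathlib

section
/- Let (Ω, μ) be a probability space, F : Ω → Ω a measure-preserving map, and 𝓛 : L²(μ) → L²(μ) a linear map satisfying ∫ (𝓛g)·h dμ = ∫ g·(h∘F) dμ for all g, h ∈ L²(μ). Then for every v ∈ L²(μ): ∫∫ (v(y) − v(y′))² dμ(y) dμ(y′) = 2 ∫ (v − (𝓛v)∘F)² dμ + ∫∫ ((𝓛v)(y) − (𝓛v)(y′))² dμ(y) dμ(y′). -/
open MeasureTheory

/-!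
For `f ∈ L²(μ)` the double integral `∫∫ ‖f y - f y'‖²` equals `2 μ(X) ∫ ‖f‖² - 2 ‖∫ f‖²`, so only
the first two moments of `v` and `L v` matter. Let `U g = g ∘ F` be the Koopman operator, an
isometry of `L²` spaces. Duality says `⟪L g, h⟫ = ⟪g, U h⟫`. With `h` constant it shows that `v` and
`L v` have the same integral. With `h = L v` it gives `⟪v, U (L v)⟫ = ‖L v‖² = ‖U (L v)‖²`, so
`v - U (L v)` is orthogonal to `U (L v)` and Pythagoras yields `‖v‖² = ‖v - U (L v)‖² + ‖L v‖²`.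
-/

open scoped RealInnerProductSpace

section

variable {X Y E : Type*} [MeasurableSpace X] [MeasurableSpace Y]
  [NormedAddCommGroup E] [InnerProductSpace ℝ E] {μ : Measure X} {ν : Measure Y}

lemma integrable_prod_inner [SFinite ν] {f : X → E} {g : Y → E}
    (hf : Integrable f μ) (hg : Integrable g ν) :
    Integrable (fun p : X × Y ↦ ⟪f p.1, g p.2⟫) (μ.prod ν) :=
  hf.op_fst_snd continuous_inner
    ⟨1, fun x y ↦ by simpa only [one_mul] using norm_inner_le_norm (𝕜 := ℝ) x y⟩ hg

lemma integral_prod_inner [CompleteSpace E] [SFinite μ] [SFinite ν] {f : X → E} {g : Y → E}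
    (hf : Integrable f μ) (hg : Integrable g ν) :
    ∫ p : X × Y, ⟪f p.1, g p.2⟫ ∂(μ.prod ν) = ⟪∫ x, f x ∂μ, ∫ y, g y ∂ν⟫ :=
  integral_prod_bilin (innerSL ℝ) hf hg

lemma integral_prod_norm_sub_sq [CompleteSpace E] [IsFiniteMeasure μ] [IsFiniteMeasure ν]
    {f : X → E} {g : Y → E} (hf : MemLp f 2 μ) (hg : MemLp g 2 ν) :
    ∫ p : X × Y, ‖f p.1 - g p.2‖ ^ 2 ∂(μ.prod ν) =
      ν.real Set.univ * ∫ x, ‖f x‖ ^ 2 ∂μ + μ.real Set.univ * ∫ y, ‖g y‖ ^ 2 ∂ν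
        - 2 * ⟪∫ x, f x ∂μ, ∫ y, g y ∂ν⟫ := by
  have hf₁ : Integrable f μ := hf.integrable one_le_two
  have hg₁ : Integrable g ν := hg.integrable one_le_two
  have hf_sq : Integrable (fun p : X × Y ↦ ‖f p.1‖ ^ 2) (μ.prod ν) :=
    hf.norm.integrable_sq.comp_fst ν
  have hg_sq : Integrable (fun p : X × Y ↦ ‖g p.2‖ ^ 2) (μ.prod ν) :=
    hg.norm.integrable_sq.comp_snd μ
  have h_sq : Integrable (fun p : X × Y ↦ ‖f p.1‖ ^ 2 + ‖g p.2‖ ^ 2) (μ.prod ν) :=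
    hf_sq.add hg_sq
  have h_inner : Integrable (fun p : X × Y ↦ ⟪f p.1, g p.2⟫) (μ.prod ν) :=
    integrable_prod_inner hf₁ hg₁
  calc ∫ p : X × Y, ‖f p.1 - g p.2‖ ^ 2 ∂(μ.prod ν)
      = ∫ p : X × Y, (‖f p.1‖ ^ 2 + ‖g p.2‖ ^ 2 - 2 * ⟪f p.1, g p.2⟫) ∂(μ.prod ν) := by
        congr with p
        rw [norm_sub_sq_real]
        ring
    _ = ∫ p : X × Y, ‖f p.1‖ ^ 2 ∂(μ.prod ν) + ∫ p : X × Y, ‖g p.2‖ ^ 2 ∂(μ.prod ν)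
          - 2 * ∫ p : X × Y, ⟪f p.1, g p.2⟫ ∂(μ.prod ν) := by
        rw [integral_sub h_sq (h_inner.const_mul 2), integral_add hf_sq hg_sq,
          integral_const_mul]
    _ = _ := by
        rw [integral_fun_fst (fun x ↦ ‖f x‖ ^ 2), integral_fun_snd (fun y ↦ ‖g y‖ ^ 2),
          integral_prod_inner hf₁ hg₁, smul_eq_mul, smul_eq_mul]

lemma norm_sq_eq_integral_norm_sq (f : Lp E 2 μ) : ‖f‖ ^ 2 = ∫ x, ‖f x‖ ^ 2 ∂μ := by
  simp only [← real_inner_self_eq_norm_sq, L2.inner_def]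

/-- `L` is a transfer operator of `F : X → Y`: it is dual, for the `L²` pairings, to the Koopman
operator `h ↦ h ∘ F`. Here `L` is a plain function, which duality makes linear when `F` is measure
preserving. -/
def IsTransferOperator (F : X → Y) (L : Lp E 2 μ → Lp E 2 ν) : Prop :=
  ∀ (g : Lp E 2 μ) (h : Lp E 2 ν), ∫ y, ⟪L g y, h y⟫ ∂ν = ∫ x, ⟪g x, h (F x)⟫ ∂μ

namespace IsTransferOperator

variable {F : X → Y} {L : Lp E 2 μ → Lp E 2 ν}

lemma inner_apply (hL : IsTransferOperator F L) (hF : MeasurePreserving F μ ν)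
    (g : Lp E 2 μ) (h : Lp E 2 ν) : ⟪L g, h⟫ = ⟪g, Lp.compMeasurePreserving F hF h⟫ := by
  rw [L2.inner_def, L2.inner_def, hL]
  refine integral_congr_ae ?_
  filter_upwards [Lp.coeFn_compMeasurePreserving h hF] with x hx
  rw [hx, Function.comp_apply]

lemma integral_apply [CompleteSpace E] [IsFiniteMeasure μ] (hL : IsTransferOperator F L)
    (hF : MeasurePreserving F μ ν) (v : Lp E 2 μ) : ∫ y, L v y ∂ν = ∫ x, v x ∂μ := by
  have : IsFiniteMeasure ν := hF.map_eq ▸ Measure.isFiniteMeasure_map μ F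
  refine ext_inner_left ℝ fun c ↦ ?_
  have h := hL.inner_apply hF v
    (indicatorConstLp 2 MeasurableSet.univ (measure_ne_top ν Set.univ) c)
  rw [Lp.indicatorConstLp_compMeasurePreserving, real_inner_comm, real_inner_comm _ v,
    L2.inner_indicatorConstLp_eq_inner_setIntegral,
    L2.inner_indicatorConstLp_eq_inner_setIntegral] at h
  simpa only [Set.preimage_univ, setIntegral_univ] using h

lemma norm_sq_eq_add (hL : IsTransferOperator F L) (hF : MeasurePreserving F μ ν)
    (v : Lp E 2 μ) :
    ‖v‖ ^ 2 = ‖v - Lp.compMeasurePreserving F hF (L v)‖ ^ 2 + ‖L v‖ ^ 2 := by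
  rw [norm_sub_sq_real, ← hL.inner_apply hF, real_inner_self_eq_norm_sq,
    Lp.norm_compMeasurePreserving]
  ring

lemma integral_norm_sq_eq_add (hL : IsTransferOperator F L) (hF : MeasurePreserving F μ ν)
    (v : Lp E 2 μ) :
    ∫ x, ‖v x‖ ^ 2 ∂μ = ∫ x, ‖v x - L v (F x)‖ ^ 2 ∂μ + ∫ y, ‖L v y‖ ^ 2 ∂ν := by
  have h_sub : ‖v - Lp.compMeasurePreserving F hF (L v)‖ ^ 2 =
      ∫ x, ‖v x - L v (F x)‖ ^ 2 ∂μ := by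
    rw [norm_sq_eq_integral_norm_sq]
    refine integral_congr_ae ?_
    filter_upwards [Lp.coeFn_sub v (Lp.compMeasurePreserving F hF (L v)),
      Lp.coeFn_compMeasurePreserving (L v) hF] with x hx_sub hx_comp
    rw [hx_sub, Pi.sub_apply, hx_comp, Function.comp_apply]
  rw [← norm_sq_eq_integral_norm_sq, ← norm_sq_eq_integral_norm_sq, ← h_sub, hL.norm_sq_eq_add hF]

end IsTransferOperator

theorem stmt6_general [CompleteSpace E] [IsFiniteMeasure μ] {F : X → Y}
    (hF : MeasurePreserving F μ ν) {L : Lp E 2 μ → Lp E 2 ν} (hL : IsTransferOperator F L)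
    (v : Lp E 2 μ) :
    ∫ p : X × X, ‖v p.1 - v p.2‖ ^ 2 ∂(μ.prod μ) =
      2 * μ.real Set.univ * ∫ x, ‖v x - L v (F x)‖ ^ 2 ∂μ +
        ∫ p : Y × Y, ‖L v p.1 - L v p.2‖ ^ 2 ∂(ν.prod ν) := by
  have : IsFiniteMeasure ν := hF.map_eq ▸ Measure.isFiniteMeasure_map μ F
  have h_mass : ν.real Set.univ = μ.real Set.univ :=
    (hF.measureReal_preimage MeasurableSet.univ.nullMeasurableSet).symm
  rw [integral_prod_norm_sub_sq (Lp.memLp v) (Lp.memLp v),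
    integral_prod_norm_sub_sq (Lp.memLp (L v)) (Lp.memLp (L v)), hL.integral_apply hF,
    hL.integral_norm_sq_eq_add hF, h_mass]
  ring

end

/-- For a transfer operator `𝓛` dual to a measure-preserving map `F` on a probability
space, and any `v ∈ L²(μ)`:
`∫∫ (v y - v y')² = 2 ∫ (v - (𝓛v)∘F)² + ∫∫ ((𝓛v) y - (𝓛v) y')²`. -/
theorem stmt6 {Ω : Type*} [MeasurableSpace Ω] (μ : Measure Ω) [IsProbabilityMeasure μ]
    (F : Ω → Ω) (hF : MeasurePreserving F μ μ)
    (L : Lp ℝ 2 μ →ₗ[ℝ] Lp ℝ 2 μ)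
    (hdual : ∀ g h : Lp ℝ 2 μ,
      ∫ x, (L g : Ω → ℝ) x * (h : Ω → ℝ) x ∂μ =
        ∫ x, (g : Ω → ℝ) x * (h : Ω → ℝ) (F x) ∂μ) :
    ∀ v : Lp ℝ 2 μ,
      ∫ p : Ω × Ω, ((v : Ω → ℝ) p.1 - (v : Ω → ℝ) p.2) ^ 2 ∂(μ.prod μ) =
        2 * (∫ x, ((v : Ω → ℝ) x - (L v : Ω → ℝ) (F x)) ^ 2 ∂μ) +
          ∫ p : Ω × Ω, ((L v : Ω → ℝ) p.1 - (L v : Ω → ℝ) p.2) ^ 2 ∂(μ.prod μ) := by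
  intro v
  have hL : IsTransferOperator F L := fun g h ↦ by simpa [mul_comm] using hdual g h
  simpa using stmt6_general hF hL v
end

section
/- Let ρ, β ∈ (0,1) and a, b, c ≥ 0. There exists a constant C > 0, depending only on ρ, β, a, b, c, with the following property. For every sequence (L_j)_{j≥1} of nonnegative reals with Σ_{j=1}^{∞} L_j² < ∞, define B_q := a·L_q + b·Σ_{p=q}^{∞} L_{p+1}/(p−q+1)² for q ≥ 1, and Γ_l^k := ρ^{k−l} ( B_{l+1} + c·Σ_{j=1}^{l} β^{l−j} L_j ) for integers 1 ≤ l ≤ k−1. Then Σ_{k=2}^{∞} ( Σ_{l=1}^{k−1} Γ_l^k )² ≤ C · Σ_{j=1}^{∞} L_j². -/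
open Finset

/-!
Up to the index shift, `L ↦ B_{l+1} + c ∑_{j ≤ l} β^{l-j} L_j` is convolution on `ℤ` with a single
two-sided kernel: it weights `L_j` by `c β^{l-j}` when `j ≤ l`, by `a` when `j = l + 1`, and by
`b / (q + 1)²` when `j = l + 2 + q`. Passing from there to `∑_l Γ_l^k` is convolution with the
one-sided kernel `ρ^m`. Both kernels are summable, so Young's inequality `‖w * f‖_p ≤ ‖w‖₁ ‖f‖_p`,
applied twice, bounds the composite. The estimates are carried out in `ℝ≥0∞`, where they need no
summability.
-/

open Function
open scoped ENNReal

section Young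

variable {ι κ G : Type*} {p : ℝ}

lemma tsum_mul_rpow_le_weight_mul_tsum (hp : 1 ≤ p) (w f : ι → ℝ≥0∞) :
    (∑' i, w i * f i) ^ p ≤ (∑' i, w i) ^ (p - 1) * ∑' i, w i * f i ^ p := by
  have hp₀ : 0 < p := by linarith
  have hroot : ∑' i, w i * f i ≤ (∑' i, w i) ^ (1 - p⁻¹) * (∑' i, w i * f i ^ p) ^ p⁻¹ := by
    rw [ENNReal.tsum_eq_iSup_sum]
    refine iSup_le fun s => (ENNReal.inner_le_weight_mul_Lp_of_nonneg s hp w f).trans ?_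
    have : 0 ≤ 1 - p⁻¹ := sub_nonneg.2 (inv_le_one_of_one_le₀ hp)
    gcongr <;> exact ENNReal.sum_le_tsum s
  calc (∑' i, w i * f i) ^ p
      ≤ ((∑' i, w i) ^ (1 - p⁻¹) * (∑' i, w i * f i ^ p) ^ p⁻¹) ^ p := by gcongr
    _ = (∑' i, w i) ^ (p - 1) * ∑' i, w i * f i ^ p := by
        rw [ENNReal.mul_rpow_of_nonneg _ _ hp₀.le, ← ENNReal.rpow_mul, ← ENNReal.rpow_mul,
          sub_mul, one_mul, inv_mul_cancel₀ hp₀.ne', ENNReal.rpow_one]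

theorem schur_test (hp : 1 ≤ p) {K : ι → κ → ℝ≥0∞} {R C : ℝ≥0∞} (hrow : ∀ i, ∑' j, K i j ≤ R)
    (hcol : ∀ j, ∑' i, K i j ≤ C) (f : κ → ℝ≥0∞) :
    ∑' i, (∑' j, K i j * f j) ^ p ≤ R ^ (p - 1) * C * ∑' j, f j ^ p := by
  have : 0 ≤ p - 1 := sub_nonneg.2 hp
  calc ∑' i, (∑' j, K i j * f j) ^ p
      ≤ ∑' i, R ^ (p - 1) * ∑' j, K i j * f j ^ p := by
        gcongr with i
        exact (tsum_mul_rpow_le_weight_mul_tsum hp _ _).trans (by gcongr; exact hrow i)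
    _ = R ^ (p - 1) * ∑' j, (∑' i, K i j) * f j ^ p := by
        simp_rw [ENNReal.tsum_mul_left, ← ENNReal.tsum_mul_right]
        rw [ENNReal.tsum_comm]
    _ ≤ R ^ (p - 1) * ∑' j, C * f j ^ p := by
        gcongr with j
        exact hcol j
    _ = R ^ (p - 1) * C * ∑' j, f j ^ p := by rw [ENNReal.tsum_mul_left, mul_assoc]

/- Evaluating the convolution along injections `x` and `y` allows sequences supported on part of the
group, here on the positive integers inside `ℤ`. -/
theorem young_convolution_of_injective [AddGroup G] (hp : 1 ≤ p) (w : G → ℝ≥0∞) {x : ι → G}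
    {y : κ → G} (hx : Injective x) (hy : Injective y) (f : κ → ℝ≥0∞) :
    ∑' i, (∑' j, w (x i - y j) * f j) ^ p ≤ (∑' g, w g) ^ p * ∑' j, f j ^ p := by
  have hrow (i : ι) : ∑' j, w (x i - y j) ≤ ∑' g, w g :=
    ENNReal.tsum_comp_le_tsum_of_injective (sub_right_injective.comp hy) w
  have hcol (j : κ) : ∑' i, w (x i - y j) ≤ ∑' g, w g :=
    ENNReal.tsum_comp_le_tsum_of_injective (sub_left_injective.comp hx) w
  have hpow : (∑' g, w g) ^ (p - 1) * ∑' g, w g = (∑' g, w g) ^ p := by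
    conv_lhs => enter [2]; rw [← ENNReal.rpow_one (∑' g, w g)]
    rw [← ENNReal.rpow_add_of_nonneg _ _ (sub_nonneg.2 hp) zero_le_one, sub_add_cancel]
  exact (schur_test hp hrow hcol f).trans_eq (by rw [hpow])

end Young

section TwoSidedKernel

/-- The kernel on `ℤ` with weights `v 0, v 1, …` at the lags `0, 1, …` and `u 0, u 1, …` at the
lags `-1, -2, …`. A sequence convolved with it is summed over its past and present with the weights
`v`, and over its strict future with the weights `u`. -/
def twoSidedKernel (u v : ℕ → ℝ≥0∞) : ℤ → ℝ≥0∞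
  | Int.ofNat m => v m
  | Int.negSucc m => u m

variable (u v f : ℕ → ℝ≥0∞)

lemma tsum_twoSidedKernel : ∑' m, twoSidedKernel u v m = ∑' m, v m + ∑' m, u m := by
  rw [← tsum_int_rec ENNReal.summable ENNReal.summable]
  exact tsum_congr fun m => by cases m <;> rfl

lemma tsum_twoSidedKernel_sub_mul (l : ℕ) :
    ∑' j : ℕ, twoSidedKernel u v (l - (j + 1)) * f (j + 1) =
      ∑ j ∈ Icc 1 l, v (l - j) * f j + ∑' j, u j * f (l + 1 + j) := by
  rw [← ENNReal.summable.sum_add_tsum_nat_add' (k := l)]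
  congr 1
  · rw [← Finset.Ico_add_one_right_eq_Icc, Finset.sum_Ico_eq_sum_range]
    refine Finset.sum_congr rfl fun j hj => ?_
    have hlag : (l : ℤ) - (j + 1) = Int.ofNat (l - (1 + j)) := by
      have := Finset.mem_range.1 hj
      grind
    rw [hlag, twoSidedKernel, add_comm j]
  · refine tsum_congr fun j => ?_
    have hlag : (l : ℤ) - (↑(j + l) + 1) = Int.negSucc j := by grind
    rw [hlag, twoSidedKernel]
    congr 2
    ring

lemma tsum_past_add_future_rpow_le {p : ℝ} (hp : 1 ≤ p) :
    ∑' l, (∑ j ∈ Icc 1 l, v (l - j) * f j + ∑' j, u j * f (l + 1 + j)) ^ p ≤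
      (∑' m, v m + ∑' m, u m) ^ p * ∑' j, f (j + 1) ^ p := by
  have hx : Injective fun l : ℕ => (l : ℤ) := Nat.cast_injective
  have hy : Injective fun j : ℕ => (j : ℤ) + 1 := (add_left_injective 1).comp Nat.cast_injective
  simp_rw [← tsum_twoSidedKernel_sub_mul, ← tsum_twoSidedKernel]
  exact young_convolution_of_injective hp (twoSidedKernel u v) hx hy fun j => f (j + 1)

end TwoSidedKernel

section ConvolutionBounds

variable {R E : Type*} [NormedRing R] [NormedAddCommGroup E] [Module R E] [IsBoundedSMul R E]
  {p : ℝ}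

/-- The factor `B_{l+1} + c ∑_{j=1}^l β^{l-j} L_j` of `Γ_l^k`, with arbitrary weights `u q` and
`v m` in place of `1/(q+1)²` and `β^m`. -/
noncomputable def innerTerm (a b c : R) (u v : ℕ → R) (L : ℕ → E) (l : ℕ) : E :=
  (a • L (l + 1) + b • ∑' q : ℕ, u q • L ((l + 1) + q + 1)) +
    c • ∑ j ∈ Icc 1 l, v (l - j) • L j

/-- The weight with which `L (l + 1 + j)` enters `innerTerm a b c u v L l`, in norm. -/
noncomputable def futureWeight (a b : R) (u : ℕ → R) : ℕ → ℝ≥0∞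
  | 0 => ‖a‖ₑ
  | q + 1 => ‖b‖ₑ * ‖u q‖ₑ

lemma tsum_futureWeight (a b : R) (u : ℕ → R) :
    ∑' j, futureWeight a b u j = ‖a‖ₑ + ‖b‖ₑ * ∑' q, ‖u q‖ₑ := by
  rw [tsum_eq_zero_add' ENNReal.summable, ← ENNReal.tsum_mul_left]
  rfl

lemma enorm_sum_smul_le {ι : Type*} (s : Finset ι) (w : ι → R) (f : ι → E) :
    ‖∑ i ∈ s, w i • f i‖ₑ ≤ ∑ i ∈ s, ‖w i‖ₑ * ‖f i‖ₑ :=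
  (enorm_sum_le s _).trans (Finset.sum_le_sum fun _ _ => enorm_smul_le)

lemma enorm_tsum_smul_le {ι : Type*} (w : ι → R) (f : ι → E) :
    ‖∑' i, w i • f i‖ₑ ≤ ∑' i, ‖w i‖ₑ * ‖f i‖ₑ :=
  enorm_tsum_le_tsum_enorm.trans (ENNReal.tsum_le_tsum fun _ => enorm_smul_le)

lemma enorm_innerTerm_le (a b c : R) (u v : ℕ → R) (L : ℕ → E) (l : ℕ) :
    ‖innerTerm a b c u v L l‖ₑ ≤ ∑ j ∈ Icc 1 l, ‖c‖ₑ * ‖v (l - j)‖ₑ * ‖L j‖ₑ +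
      ∑' j, futureWeight a b u j * ‖L (l + 1 + j)‖ₑ := by
  have hpast : ‖c • ∑ j ∈ Icc 1 l, v (l - j) • L j‖ₑ ≤
      ∑ j ∈ Icc 1 l, ‖c‖ₑ * ‖v (l - j)‖ₑ * ‖L j‖ₑ := by
    simp_rw [mul_assoc, ← Finset.mul_sum]
    exact enorm_smul_le.trans (by gcongr; exact enorm_sum_smul_le _ _ _)
  have hfuture : ‖a • L (l + 1) + b • ∑' q, u q • L (l + 1 + q + 1)‖ₑ ≤
      ∑' j, futureWeight a b u j * ‖L (l + 1 + j)‖ₑ := by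
    rw [tsum_eq_zero_add' ENNReal.summable]
    simp_rw [futureWeight, mul_assoc, ENNReal.tsum_mul_left]
    exact (enorm_add_le _ _).trans (add_le_add enorm_smul_le
      (enorm_smul_le.trans (by gcongr; exact enorm_tsum_smul_le _ _)))
  rw [innerTerm, add_comm]
  exact (enorm_add_le _ _).trans (add_le_add hpast hfuture)

lemma tsum_enorm_innerTerm_rpow_le (hp : 1 ≤ p) (a b c : R) (u v : ℕ → R) (L : ℕ → E) :
    ∑' l, ‖innerTerm a b c u v L l‖ₑ ^ p ≤
      (‖c‖ₑ * ∑' m, ‖v m‖ₑ + (‖a‖ₑ + ‖b‖ₑ * ∑' q, ‖u q‖ₑ)) ^ p * ∑' j, ‖L (j + 1)‖ₑ ^ p := by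
  simp_rw [← tsum_futureWeight, ← ENNReal.tsum_mul_left (a := ‖c‖ₑ)]
  refine le_trans ?_ (tsum_past_add_future_rpow_le _ (fun m => ‖c‖ₑ * ‖v m‖ₑ)
    (fun j => ‖L j‖ₑ) hp)
  gcongr with l
  exact enorm_innerTerm_le a b c u v L l

lemma tsum_enorm_causal_rpow_le (hp : 1 ≤ p) (r : ℕ → R) (D : ℕ → E) :
    ∑' k, ‖∑ l ∈ Icc 1 (k - 1), r (k - l) • D l‖ₑ ^ p ≤
      (∑' m, ‖r m‖ₑ) ^ p * ∑' l, ‖D (l + 1)‖ₑ ^ p := by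
  have hyoung := tsum_past_add_future_rpow_le 0 (fun m => ‖r m‖ₑ) (fun l => ‖D l‖ₑ) hp
  simp only [Pi.zero_apply, zero_mul, tsum_zero, add_zero] at hyoung
  refine le_trans ?_ hyoung
  gcongr with k
  refine (enorm_sum_smul_le _ _ _).trans (Finset.sum_le_sum_of_subset ?_)
  exact Finset.Icc_subset_Icc_right (Nat.sub_le k 1)

theorem tsum_enorm_causal_innerTerm_rpow_le (hp : 1 ≤ p) (r u v : ℕ → R) (a b c : R)
    (L : ℕ → E) :
    ∑' k, ‖∑ l ∈ Icc 1 (k - 1), r (k - l) • innerTerm a b c u v L l‖ₑ ^ p ≤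
      ((∑' m, ‖r m‖ₑ) * (‖c‖ₑ * ∑' m, ‖v m‖ₑ + (‖a‖ₑ + ‖b‖ₑ * ∑' q, ‖u q‖ₑ))) ^ p *
        ∑' j, ‖L (j + 1)‖ₑ ^ p := by
  rw [ENNReal.mul_rpow_of_nonneg _ _ (by linarith), mul_assoc]
  refine (tsum_enorm_causal_rpow_le hp r _).trans ?_
  gcongr
  exact (ENNReal.tsum_comp_le_tsum_of_injective (add_left_injective 1) _).trans
    (tsum_enorm_innerTerm_rpow_le hp a b c u v L)

end ConvolutionBounds

section Summability

variable {ι κ E F : Type*} [NormedAddCommGroup E] [NormedAddCommGroup F] {p : ℝ}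

lemma tsum_enorm_rpow_eq_ofReal (hp : 0 ≤ p) {f : ι → E} (hf : Summable fun i => ‖f i‖ ^ p) :
    ∑' i, ‖f i‖ₑ ^ p = ENNReal.ofReal (∑' i, ‖f i‖ ^ p) := by
  rw [ENNReal.ofReal_tsum_of_nonneg (fun i => by positivity) hf]
  simp_rw [← ENNReal.ofReal_rpow_of_nonneg (norm_nonneg _) hp, ofReal_norm]

lemma summable_and_tsum_norm_rpow_le (hp : 0 ≤ p) {f : ι → E} {g : κ → F} {C : ℝ≥0∞}
    (hC : C ≠ ∞) (hg : Summable fun j => ‖g j‖ ^ p)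
    (h : ∑' i, ‖f i‖ₑ ^ p ≤ C * ∑' j, ‖g j‖ₑ ^ p) :
    (Summable fun i => ‖f i‖ ^ p) ∧ ∑' i, ‖f i‖ ^ p ≤ C.toReal * ∑' j, ‖g j‖ ^ p := by
  rw [tsum_enorm_rpow_eq_ofReal hp hg] at h
  have hbound : C * ENNReal.ofReal (∑' j, ‖g j‖ ^ p) ≠ ∞ :=
    ENNReal.mul_ne_top hC ENNReal.ofReal_ne_top
  have hf : Summable fun i => ‖f i‖ ^ p := by
    simpa only [← ENNReal.toReal_rpow, toReal_enorm] using
      ENNReal.summable_toReal (ne_top_of_le_ne_top hbound h)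
  refine ⟨hf, ?_⟩
  rw [tsum_enorm_rpow_eq_ofReal hp hf] at h
  have hg₀ : 0 ≤ ∑' j, ‖g j‖ ^ p := tsum_nonneg fun j => by positivity
  simpa [ENNReal.toReal_mul, ENNReal.toReal_ofReal hg₀] using
    (ENNReal.ofReal_le_iff_le_toReal hbound).1 h

lemma summable_smul_of_summable_norm_rpow {R : Type*} [NormedRing R] [Module R E]
    [IsBoundedSMul R E] [CompleteSpace E] (hp : 0 < p) {w : ι → R} {f : ι → E}
    (hw : Summable fun i => ‖w i‖) (hf : Summable fun i => ‖f i‖ ^ p) :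
    Summable fun i => w i • f i := by
  have hsup (i : ι) : ‖f i‖ ≤ (∑' j, ‖f j‖ ^ p) ^ p⁻¹ := by
    rw [Real.le_rpow_inv_iff_of_pos (norm_nonneg _) (tsum_nonneg fun j => by positivity) hp]
    exact hf.le_tsum i fun j _ => by positivity
  refine .of_norm_bounded (hw.mul_right ((∑' j, ‖f j‖ ^ p) ^ p⁻¹)) fun i => ?_
  exact (norm_smul_le _ _).trans (by gcongr; exact hsup i)

end Summability

theorem stmt10_general {R E : Type*} [NormedRing R] [NormedAddCommGroup E] [Module R E]
    [IsBoundedSMul R E] [CompleteSpace E] {p : ℝ} (hp : 1 ≤ p) {r u v : ℕ → R}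
    (hr : Summable fun m => ‖r m‖) (hu : Summable fun q => ‖u q‖) (hv : Summable fun m => ‖v m‖)
    (a b c : R) :
    ∃ C > (0 : ℝ), ∀ L : ℕ → E, Summable (fun j => ‖L (j + 1)‖ ^ p) →
      (∀ l, Summable fun q => u q • L ((l + 1) + q + 1)) ∧
      (Summable fun k => ‖∑ l ∈ Icc 1 (k - 1), r (k - l) • innerTerm a b c u v L l‖ ^ p) ∧
      ∑' k, ‖∑ l ∈ Icc 1 (k - 1), r (k - l) • innerTerm a b c u v L l‖ ^ p ≤
        C * ∑' j, ‖L (j + 1)‖ ^ p := by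
  have hp₀ : 0 < p := by linarith
  set A : ℝ≥0∞ :=
    ((∑' m, ‖r m‖ₑ) * (‖c‖ₑ * ∑' m, ‖v m‖ₑ + (‖a‖ₑ + ‖b‖ₑ * ∑' q, ‖u q‖ₑ))) ^ p
  have hA_fin : A ≠ ∞ := by
    have := tsum_enorm_ne_top_iff_summable_norm.2 hr
    have := tsum_enorm_ne_top_iff_summable_norm.2 hu
    have := tsum_enorm_ne_top_iff_summable_norm.2 hv
    exact ENNReal.rpow_ne_top_of_nonneg hp₀.le (by finiteness)
  refine ⟨A.toReal + 1, by positivity, fun L hL => ⟨fun l => ?_, ?_⟩⟩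
  · refine summable_smul_of_summable_norm_rpow hp₀ hu ?_
    simpa only [Function.comp_def] using hL.comp_injective (add_right_injective (l + 1))
  · obtain ⟨hsum, hle⟩ := summable_and_tsum_norm_rpow_le hp₀.le hA_fin hL
      (tsum_enorm_causal_innerTerm_rpow_le hp r u v a b c L)
    refine ⟨hsum, hle.trans ?_⟩
    gcongr
    exact le_add_of_nonneg_right zero_le_one

lemma summable_norm_inv_succ_sq : Summable fun q : ℕ => ‖(((q : ℝ) + 1) ^ 2)⁻¹‖ := by
  have h := (summable_nat_add_iff 1).2 (Real.summable_nat_pow_inv.2 one_lt_two)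
  exact_mod_cast h.norm

/-- Let `ρ, β ∈ (0,1)` and `a, b, c ≥ 0`. There is a constant `C > 0`, depending only on
`ρ, β, a, b, c`, such that for every nonnegative square-summable sequence `(L_j)_{j ≥ 1}`,
with `B_q := a L_q + b ∑_{p=q}^∞ L_{p+1}/(p-q+1)²` and
`Γ_l^k := ρ^{k-l} (B_{l+1} + c ∑_{j=1}^l β^{l-j} L_j)`, one has
`∑_{k=2}^∞ (∑_{l=1}^{k-1} Γ_l^k)² ≤ C ∑_{j=1}^∞ L_j²`. -/
theorem stmt10 (ρ β : ℝ) (hρ : ρ ∈ Set.Ioo (0 : ℝ) 1) (hβ : β ∈ Set.Ioo (0 : ℝ) 1)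
    (a b c : ℝ) (ha : 0 ≤ a) (hb : 0 ≤ b) (hc : 0 ≤ c) :
    ∃ C > (0 : ℝ), ∀ L : ℕ → ℝ, (∀ j, 0 ≤ L j) →
      Summable (fun j : ℕ => L (j + 1) ^ 2) →
      ∑' k : ℕ,
          (∑ l ∈ Finset.Icc 1 (k - 1),
            ρ ^ (k - l) *
              ((a * L (l + 1) + b * ∑' p : ℕ, L ((l + 1) + p + 1) / ((p : ℝ) + 1) ^ 2) +
                c * ∑ j ∈ Finset.Icc 1 l, β ^ (l - j) * L j)) ^ 2 ≤
        C * ∑' j : ℕ, L (j + 1) ^ 2 := by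
  obtain ⟨C, hC, h⟩ := stmt10_general (E := ℝ) one_le_two
    (summable_geometric_of_lt_one hρ.1.le hρ.2).norm summable_norm_inv_succ_sq
    (summable_geometric_of_lt_one hβ.1.le hβ.2).norm a b c
  refine ⟨C, hC, fun L _ hL => ?_⟩
  simpa [innerTerm, div_eq_inv_mul] using (h L (by simpa using hL)).2.2
end

section
/- Fix an integer p₀ ≥ 1 and define ℓ : {1,2,3,…} → {0,1,2,…} by ℓ(k) = k − 1 if k ≤ p₀·log(1+k), and ℓ(k) = p₀·⌊log(1+k)⌋ otherwise (natural logarithm). Let α ∈ (0,1), η > 0 and s > 0, and suppose p₀·η·log(1/α) ≥ s. Then there exists a constant C > 0 such that α^{η·ℓ(m)} ≤ C·(1+m)^{−s} for every integer m ≥ 1. -/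
/-- The truncation function `ℓ` from (5.2): `ℓ(k) = k - 1` if `k ≤ p₀ log(1+k)`,
and `ℓ(k) = p₀ ⌊log(1+k)⌋` otherwise. -/
noncomputable def ell (p₀ : ℕ) (k : ℕ) : ℕ :=
  if (k : ℝ) ≤ (p₀ : ℝ) * Real.log (1 + (k : ℝ)) then k - 1
  else p₀ * ⌊Real.log (1 + (k : ℝ))⌋₊

/-!
The function `ell p₀` stays within a bounded distance of `p₀ log (1 + ·)`. It never exceeds
`p₀ log (1 + m)`, and it falls short by at most `p₀ log p₀ + 1`: in the second branch the floor
costs at most `p₀`, and in the first branch `m` is compared with `p₀ log (1 + m)` through the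
tangent line of the logarithm at `p₀`. Hence `α ^ (η ell p₀ m)` agrees with
`(1 + m) ^ (p₀ η log α)` up to bounded factors, whatever the signs of `η` and `log α`.
-/

theorem mul_log_le_add_mul_log_sub {a x : ℝ} (ha : 0 ≤ a) (hx : 0 < x) :
    a * Real.log x ≤ x + a * Real.log a - a := by
  rcases ha.eq_or_lt with rfl | ha
  · simpa using hx.le
  have tangent : Real.log x - Real.log a ≤ x / a - 1 :=
    Real.log_div hx.ne' ha.ne' ▸ Real.log_le_sub_one_of_pos (div_pos hx ha)
  have scaled_tangent : a * (Real.log x - Real.log a) ≤ x - a :=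
    calc a * (Real.log x - Real.log a) ≤ a * (x / a - 1) := by gcongr
      _ = x - a := by field_simp
  linarith

theorem ell_le_mul_log (p₀ m : ℕ) : (ell p₀ m : ℝ) ≤ p₀ * Real.log (1 + m) := by
  unfold ell
  split_ifs with hm
  · exact (Nat.cast_le.2 (Nat.sub_le m 1)).trans hm
  · have log_nonneg : 0 ≤ Real.log (1 + m) := Real.log_nonneg (by simp)
    push_cast
    gcongr
    exact Nat.floor_le log_nonneg

theorem mul_log_le_ell_add (p₀ m : ℕ) :
    p₀ * Real.log (1 + m) ≤ ell p₀ m + (p₀ * Real.log p₀ + 1) := by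
  rcases p₀.eq_zero_or_pos with rfl | hp₀
  · simp only [Nat.cast_zero, zero_mul]
    positivity
  have tangent {x : ℝ} (hx : 0 < x) : p₀ * Real.log x ≤ x + p₀ * Real.log p₀ - p₀ :=
    mul_log_le_add_mul_log_sub p₀.cast_nonneg hx
  unfold ell
  split_ifs
  · have one_le : (1 : ℝ) ≤ p₀ := mod_cast hp₀
    have le_pred_add_one : (m : ℝ) ≤ (m - 1 : ℕ) + 1 := mod_cast (le_tsub_add : m ≤ m - 1 + 1)
    linarith [tangent (x := 1 + m) (by positivity)]
  · have le_mul_log_add_one : (p₀ : ℝ) ≤ p₀ * Real.log p₀ + 1 := by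
      have tangent_one := tangent one_pos
      rw [Real.log_one, mul_zero] at tangent_one
      linarith
    calc p₀ * Real.log (1 + m) ≤ p₀ * (⌊Real.log (1 + (m : ℝ))⌋₊ + 1) := by
          gcongr
          exact (Nat.lt_floor_add_one _).le
      _ = (p₀ * ⌊Real.log (1 + (m : ℝ))⌋₊ : ℕ) + (p₀ : ℝ) := by push_cast; ring
      _ ≤ (p₀ * ⌊Real.log (1 + (m : ℝ))⌋₊ : ℕ) + (p₀ * Real.log p₀ + 1) := by gcongr

theorem abs_ell_sub_mul_log_le (p₀ m : ℕ) :
    |(ell p₀ m : ℝ) - p₀ * Real.log (1 + m)| ≤ p₀ * Real.log p₀ + 1 := by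
  rw [abs_sub_comm, abs_of_nonneg (sub_nonneg.2 (ell_le_mul_log p₀ m))]
  exact sub_le_iff_le_add'.2 (mul_log_le_ell_add p₀ m)

theorem rpow_mul_ell_le {α : ℝ} (hα : 0 < α) (η : ℝ) (p₀ m : ℕ) :
    α ^ (η * ell p₀ m) ≤
      Real.exp (|η * Real.log α| * (p₀ * Real.log p₀ + 1)) *
        (1 + m : ℝ) ^ (p₀ * η * Real.log α) := by
  have deviation : η * Real.log α * (ell p₀ m - p₀ * Real.log (1 + m)) ≤
      |η * Real.log α| * (p₀ * Real.log p₀ + 1) :=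
    calc η * Real.log α * (ell p₀ m - p₀ * Real.log (1 + m))
        ≤ |η * Real.log α| * |ell p₀ m - p₀ * Real.log (1 + m)| :=
          (le_abs_self _).trans (abs_mul _ _).le
      _ ≤ |η * Real.log α| * (p₀ * Real.log p₀ + 1) := by
          gcongr
          exact abs_ell_sub_mul_log_le p₀ m
  rw [Real.rpow_def_of_pos hα, Real.rpow_def_of_pos (by positivity : (0 : ℝ) < 1 + m),
    ← Real.exp_add, Real.exp_le_exp]
  linarith

theorem stmt11_general (p₀ : ℕ) {α η s : ℝ} (hα : 0 < α)
    (h : s ≤ p₀ * η * Real.log (1 / α)) :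
    ∃ C > (0 : ℝ), ∀ m : ℕ, 1 ≤ m →
      α ^ (η * (ell p₀ m : ℝ)) ≤ C * (1 + (m : ℝ)) ^ (-s) := by
  have exponent_le : p₀ * η * Real.log α ≤ -s := by
    rw [one_div, Real.log_inv] at h
    linarith
  refine ⟨Real.exp (|η * Real.log α| * (p₀ * Real.log p₀ + 1)), Real.exp_pos _, fun m _ =>
    (rpow_mul_ell_le hα η p₀ m).trans ?_⟩
  gcongr
  simp

/-- If `α ∈ (0,1)`, `η > 0`, `s > 0` and `p₀ η log(1/α) ≥ s`, then there is `C > 0`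
with `α^{η ℓ(m)} ≤ C (1+m)^{-s}` for all integers `m ≥ 1`. -/
theorem stmt11 (p₀ : ℕ) (hp₀ : 1 ≤ p₀) (α η s : ℝ)
    (hα : α ∈ Set.Ioo (0 : ℝ) 1) (hη : 0 < η) (hs : 0 < s)
    (h : s ≤ (p₀ : ℝ) * η * Real.log (1 / α)) :
    ∃ C > (0 : ℝ), ∀ m : ℕ, 1 ≤ m →
      α ^ (η * (ell p₀ m : ℝ)) ≤ C * (1 + (m : ℝ)) ^ (-s) := by
  exact stmt11_general p₀ hα.1 h
end
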